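/- (Great icosahedron algebraic solution of PVIμ, μ = −1/5) Define P(s) = 9 − 342s² + 4855s⁴ − 28852s⁶ + 63015s⁸ − 1942s¹⁰ + 121s¹², and the rational functions x(s) = (s−1)⁵(1+3s)³(−1+4s+s²)/((1+s)⁵(−1+3s)³(−1−4s+s²)) and y(s) = (s−1)⁴(1+3s)²(−1+4s+s²)(3−30s²+11s⁴)²/((1+s)(−1+3s)(1+3s²)P(s)). Then for every s ∈ ℂ at which all the denominators involved are nonzero, x'(s) ≠ 0, x(s) ∉ {0,1}, and y(s) ∉ {0, 1, x(s)}, the pair (x(s), y(s)) satisfies the Painlevé VI equation PVIμ with μ = −1/5 parametrically: setting Y₁ = y'(s)/x'(s) and Y₂ = (y''(s)x'(s) − y'(s)x''(s))/x'(s)³, one has Y₂ = (1/2)(1/y(s) + 1/(y(s)−1) + 1/(y(s)−x(s)))Y₁² − (1/x(s) + 1/(x(s)−1) + 1/(y(s)−x(s)))Y₁ + (1/2)·y(s)(y(s)−1)(y(s)−x(s))/(x(s)²(x(s)−1)²)·[49/25 + x(s)(x(s)−1)/(y(s)−x(s))²]. -/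

import Mathlib

/-- The polynomial `P(s)` of the great icosahedron solution. -/
noncomputable def greatIcosaP : ℂ → ℂ := fun s =>
  9 - 342 * s ^ 2 + 4855 * s ^ 4 - 28852 * s ^ 6 + 63015 * s ^ 8 -
    1942 * s ^ 10 + 121 * s ^ 12

/-- The parametrization `x(s)` of the great icosahedron solution. -/
noncomputable def greatIcosaX : ℂ → ℂ := fun s =>
  (s - 1) ^ 5 * (1 + 3 * s) ^ 3 * (-1 + 4 * s + s ^ 2) /
    ((1 + s) ^ 5 * (-1 + 3 * s) ^ 3 * (-1 - 4 * s + s ^ 2))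

/-- The parametrization `y(s)` of the great icosahedron solution. -/
noncomputable def greatIcosaY : ℂ → ℂ := fun s =>
  (s - 1) ^ 4 * (1 + 3 * s) ^ 2 * (-1 + 4 * s + s ^ 2) *
      (3 - 30 * s ^ 2 + 11 * s ^ 4) ^ 2 /
    ((1 + s) * (-1 + 3 * s) * (1 + 3 * s ^ 2) * greatIcosaP s)

/-!
Painlevé VI with parameter `μ` is the equation satisfied by the position `y` in Okamoto's
Hamiltonian system with
`H = (y (y - 1) (y - x) p² + y (y - 1) p + μ (1 - μ) (y - x)) / (x (x - 1))`.
Solving `dy/dx = ∂H/∂p` for `p` along the great icosahedron curve gives a rational function of `s`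
with small factors, so the second-order equation reduces to the two first-order equations of
Hamilton, that is, to two polynomial identities in `s`.
-/

open scoped Topology

section OkamotoSystem

/-- The value of `d²y/dx²` prescribed by the Painlevé VI equation with parameter `μ` when
`dy/dx = m`. -/
def painleveVIRhs {K : Type*} [Field K] (μ x y m : K) : K :=
  (1 / 2) * (1 / y + 1 / (y - 1) + 1 / (y - x)) * m ^ 2
    - (1 / x + 1 / (x - 1) + 1 / (y - x)) * m
    + (1 / 2) * (y * (y - 1) * (y - x) / (x ^ 2 * (x - 1) ^ 2)) *
      ((2 * μ - 1) ^ 2 + x * (x - 1) / (y - x) ^ 2)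

/-- The velocity `x (x - 1) ∂H/∂p` of Okamoto's Hamiltonian `H` for Painlevé VI, in the polynomial
form obtained by clearing the denominator `x (x - 1)`. -/
def okamotoVelocity {R : Type*} [CommRing R] (x y p : R) : R :=
  y * (y - 1) * (2 * ((y - x) * p) + 1)

/-- The force `-x (x - 1) ∂H/∂y` of Okamoto's Hamiltonian `H` for Painlevé VI with parameter `μ`,
grouped by the products `y p`, `(y - 1) p` and `(y - x) p`. -/
def okamotoForce {R : Type*} [CommRing R] (μ x y p : R) : R :=
  -(y * p * ((y - 1) * p) + (y - 1) * p * ((y - x) * p) + (y - x) * p * (y * p) +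
    (y * p + (y - 1) * p) + μ * (1 - μ))

theorem okamotoForce_eq_div {K : Type*} [Field K] {μ x y p a b c d k : K} (hd : d ≠ 0)
    (hk : k ≠ 0) (ha : y * p = a / d) (hb : (y - 1) * p = b / d)
    (hc : (y - x) * p = c / (k * d)) :
    okamotoForce μ x y p =
      -(k * (a * b) + (a + b) * c + k * (a + b) * d + μ * (1 - μ) * k * d ^ 2) / (k * d ^ 2) := by
  rw [okamotoForce, ha, hb, hc]
  field_simp
  ring

variable {𝕜 : Type*} [NontriviallyNormedField 𝕜]

/-- The parametrized curve `t ↦ (x t, y t, p t)` satisfies Hamilton's equations of Okamoto's system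
at the parameter `s`, with `x` as the time. -/
structure SolvesOkamotoAt (μ : 𝕜) (x y p : 𝕜 → 𝕜) (s : 𝕜) : Prop where
  hasDerivAt_position :
    HasDerivAt y (deriv x s / (x s * (x s - 1)) * okamotoVelocity (x s) (y s) (p s)) s
  hasDerivAt_momentum :
    HasDerivAt p (deriv x s / (x s * (x s - 1)) * okamotoForce μ (x s) (y s) (p s)) s

theorem parametric_second_deriv {x y m : 𝕜 → 𝕜} {s m' : 𝕜}
    (hy : deriv y =ᶠ[𝓝 s] fun t => deriv x t * m t) (hx : DifferentiableAt 𝕜 (deriv x) s)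
    (hm : HasDerivAt m m' s) (hne : deriv x s ≠ 0) :
    (deriv (deriv y) s * deriv x s - deriv y s * deriv (deriv x) s) / deriv x s ^ 3 =
      m' / deriv x s := by
  rw [hy.deriv_eq, hy.eq_of_nhds, (hx.hasDerivAt.fun_mul hm).deriv]
  field_simp
  ring

theorem SolvesOkamotoAt.hasDerivAt_slope [NeZero (2 : 𝕜)] {μ : 𝕜} {x y p : 𝕜 → 𝕜} {s : 𝕜}
    (h : SolvesOkamotoAt μ x y p s) (hdx : DifferentiableAt 𝕜 x s) (hx0 : x s ≠ 0)
    (hx1 : x s ≠ 1) (hy0 : y s ≠ 0) (hy1 : y s ≠ 1) (hyx : y s ≠ x s) :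
    HasDerivAt (fun t => okamotoVelocity (x t) (y t) (p t) / (x t * (x t - 1)))
      (deriv x s * painleveVIRhs μ (x s) (y s)
        (okamotoVelocity (x s) (y s) (p s) / (x s * (x s - 1)))) s := by
  have hx := hdx.hasDerivAt
  obtain ⟨hy, hp⟩ := h
  rw [← sub_ne_zero] at hx1 hy1 hyx
  refine HasDerivAt.congr_deriv (((hy.fun_mul (hy.sub_const 1)).fun_mul
    ((((hy.fun_sub hx).fun_mul hp).const_mul 2).add_const 1)).fun_div
    (hx.fun_mul (hx.sub_const 1)) (mul_ne_zero hx0 hx1)) ?_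
  unfold painleveVIRhs okamotoVelocity okamotoForce
  field_simp
  ring

theorem painleveVI_of_solvesOkamotoAt [NeZero (2 : 𝕜)] {μ : 𝕜} {x y p : 𝕜 → 𝕜} {s : 𝕜}
    (h : ∀ᶠ t in 𝓝 s, SolvesOkamotoAt μ x y p t) (hdx : deriv x s ≠ 0)
    (hddx : DifferentiableAt 𝕜 (deriv x) s) (hx0 : x s ≠ 0) (hx1 : x s ≠ 1) (hy0 : y s ≠ 0)
    (hy1 : y s ≠ 1) (hyx : y s ≠ x s) :
    (deriv (deriv y) s * deriv x s - deriv y s * deriv (deriv x) s) / deriv x s ^ 3 =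
      painleveVIRhs μ (x s) (y s) (deriv y s / deriv x s) := by
  have hy : deriv y =ᶠ[𝓝 s] fun t =>
      deriv x t * (okamotoVelocity (x t) (y t) (p t) / (x t * (x t - 1))) :=
    h.mono fun t ht => by rw [ht.hasDerivAt_position.deriv, div_mul_eq_mul_div, mul_div_assoc]
  have hslope := h.self_of_nhds.hasDerivAt_slope (differentiableAt_of_deriv_ne_zero hdx)
    hx0 hx1 hy0 hy1 hyx
  rw [parametric_second_deriv hy hddx hslope hdx, hy.eq_of_nhds, mul_div_cancel_left₀ _ hdx,
    mul_div_cancel_left₀ _ hdx]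

end OkamotoSystem

namespace GreatIcosahedron

/-- The polynomial whose roots are the generic double zeros of `y`. -/
def yZeroFactor (s : ℂ) : ℂ := 3 - 30 * s ^ 2 + 11 * s ^ 4

/-- The polynomial whose roots are the generic double zeros of `y - 1`. -/
def yOneFactor (s : ℂ) : ℂ := 1 + 8 * s - 18 * s ^ 2 - 40 * s ^ 3 + s ^ 4

/-- The polynomial whose roots are the generic double zeros of `y - x`. -/
def yXFactor (s : ℂ) : ℂ := 1 - 8 * s - 18 * s ^ 2 + 40 * s ^ 3 + s ^ 4

/-- The nontrivial factor of the numerator of the momentum `p`. -/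
def momentumFactor (s : ℂ) : ℂ := 1 - 7 * s ^ 2 + 59 * s ^ 4 + 11 * s ^ 6

/-- The denominator of the momentum `p`. -/
def momentumDenom (s : ℂ) : ℂ :=
  640 * s ^ 4 * (s - 1) ^ 4 * (1 + 3 * s) ^ 2 * yZeroFactor s * yOneFactor s * yXFactor s

/-- The momentum `p` conjugate to `y`, found by solving `dy/dx = ∂H/∂p`. -/
noncomputable def momentum (s : ℂ) : ℂ :=
  3 * momentumFactor s * (1 + s) * (-1 + 3 * s) * (-1 - 4 * s + s ^ 2) * (1 + 3 * s ^ 2) *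
    greatIcosaP s / momentumDenom s

/-- The parameters that are neither zeros nor poles of `x`, `x - 1`, `y`, `y - 1`, `y - x`,
described by the factors of these functions. -/
def IsRegular (s : ℂ) : Prop :=
  s ≠ 0 ∧ s - 1 ≠ 0 ∧ 1 + s ≠ 0 ∧ 1 + 3 * s ≠ 0 ∧ -1 + 3 * s ≠ 0 ∧ -1 + 4 * s + s ^ 2 ≠ 0 ∧
    -1 - 4 * s + s ^ 2 ≠ 0 ∧ 1 - 5 * s ^ 2 ≠ 0 ∧ 1 + 3 * s ^ 2 ≠ 0 ∧ greatIcosaP s ≠ 0 ∧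
    yZeroFactor s ≠ 0 ∧ yOneFactor s ≠ 0 ∧ yXFactor s ≠ 0

@[fun_prop]
theorem differentiable_greatIcosaP : Differentiable ℂ greatIcosaP := by
  unfold greatIcosaP; fun_prop

@[fun_prop]
theorem differentiable_yZeroFactor : Differentiable ℂ yZeroFactor := by
  unfold yZeroFactor; fun_prop

@[fun_prop]
theorem differentiable_yOneFactor : Differentiable ℂ yOneFactor := by
  unfold yOneFactor; fun_prop

@[fun_prop]
theorem differentiable_yXFactor : Differentiable ℂ yXFactor := by
  unfold yXFactor; fun_prop

@[fun_prop]
theorem differentiable_momentumFactor : Differentiable ℂ momentumFactor := by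
  unfold momentumFactor; fun_prop

@[fun_prop]
theorem differentiable_momentumDenom : Differentiable ℂ momentumDenom := by
  unfold momentumDenom; fun_prop

theorem isOpen_setOf_isRegular : IsOpen {s | IsRegular s} := by
  have hP := differentiable_greatIcosaP.continuous
  have hY0 := differentiable_yZeroFactor.continuous
  have hY1 := differentiable_yOneFactor.continuous
  have hYX := differentiable_yXFactor.continuous
  simp only [IsRegular, Set.ofPred_and]
  repeat' apply IsOpen.inter
  all_goals exact isOpen_ne_fun (by fun_prop) continuous_const

variable {s : ℂ}

theorem greatIcosaX_sub_one
    (hden : (1 + s) ^ 5 * (-1 + 3 * s) ^ 3 * (-1 - 4 * s + s ^ 2) ≠ 0) :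
    greatIcosaX s - 1 = -256 * s ^ 5 * (1 - 5 * s ^ 2) /
      ((1 + s) ^ 5 * (-1 + 3 * s) ^ 3 * (-1 - 4 * s + s ^ 2)) := by
  rw [greatIcosaX, div_sub_one hden]
  ring

theorem greatIcosaY_sub_one
    (hden : (1 + s) * (-1 + 3 * s) * (1 + 3 * s ^ 2) * greatIcosaP s ≠ 0) :
    greatIcosaY s - 1 = 64 * s ^ 4 * (1 - 5 * s ^ 2) * yOneFactor s ^ 2 /
      ((1 + s) * (-1 + 3 * s) * (1 + 3 * s ^ 2) * greatIcosaP s) := by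
  rw [greatIcosaY, div_sub_one hden]
  unfold greatIcosaP yOneFactor
  ring

theorem greatIcosaY_sub_greatIcosaX
    (hx : (1 + s) ^ 5 * (-1 + 3 * s) ^ 3 * (-1 - 4 * s + s ^ 2) ≠ 0)
    (hy : (1 + s) * (-1 + 3 * s) * (1 + 3 * s ^ 2) * greatIcosaP s ≠ 0) :
    greatIcosaY s - greatIcosaX s = 64 * s ^ 4 * (s - 1) ^ 4 * (1 + 3 * s) ^ 2 *
      (-1 + 4 * s + s ^ 2) * (1 - 5 * s ^ 2) * yXFactor s ^ 2 /
      ((1 + s) ^ 5 * (-1 + 3 * s) ^ 3 * (-1 - 4 * s + s ^ 2) * (1 + 3 * s ^ 2) *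
        greatIcosaP s) := by
  obtain ⟨⟨-, hq⟩, hP⟩ : (_ ∧ 1 + 3 * s ^ 2 ≠ 0) ∧ greatIcosaP s ≠ 0 := by
    simpa only [mul_ne_zero_iff] using hy
  rw [greatIcosaY, greatIcosaX, div_sub_div _ _ hy hx, div_eq_div_iff (mul_ne_zero hy hx)
    (mul_ne_zero (mul_ne_zero hx hq) hP)]
  unfold greatIcosaP yXFactor
  ring

theorem isRegular_of_ne
    (hx : (1 + s) ^ 5 * (-1 + 3 * s) ^ 3 * (-1 - 4 * s + s ^ 2) ≠ 0)
    (hy : (1 + s) * (-1 + 3 * s) * (1 + 3 * s ^ 2) * greatIcosaP s ≠ 0)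
    (hx0 : greatIcosaX s ≠ 0) (hx1 : greatIcosaX s ≠ 1)
    (hy0 : greatIcosaY s ≠ 0) (hy1 : greatIcosaY s ≠ 1)
    (hyx : greatIcosaY s ≠ greatIcosaX s) : IsRegular s := by
  rw [← sub_ne_zero, greatIcosaX_sub_one hx] at hx1
  rw [← sub_ne_zero, greatIcosaY_sub_one hy] at hy1
  rw [← sub_ne_zero, greatIcosaY_sub_greatIcosaX hx hy] at hyx
  rw [greatIcosaX] at hx0
  rw [greatIcosaY] at hy0
  simp only [div_ne_zero_iff, mul_ne_zero_iff, pow_ne_zero_iff, ne_eq, OfNat.ofNat_ne_zero,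
    not_false_eq_true] at hx hy hx0 hx1 hy0 hy1 hyx
  unfold IsRegular yZeroFactor
  tauto

theorem IsRegular.greatIcosaX_denom_ne_zero (hs : IsRegular s) :
    (1 + s) ^ 5 * (-1 + 3 * s) ^ 3 * (-1 - 4 * s + s ^ 2) ≠ 0 := by
  obtain ⟨-, -, hd, -, he, -, hf, -⟩ := hs
  simp [hd, he, hf]

theorem IsRegular.greatIcosaY_denom_ne_zero (hs : IsRegular s) :
    (1 + s) * (-1 + 3 * s) * (1 + 3 * s ^ 2) * greatIcosaP s ≠ 0 := by
  obtain ⟨-, -, hd, -, he, -, -, -, hq, hP, -⟩ := hs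
  simp [hd, he, hq, hP]

theorem IsRegular.momentumDenom_ne_zero (hs : IsRegular s) : momentumDenom s ≠ 0 := by
  obtain ⟨h0, ha, -, hb, -, -, -, -, -, -, hY0, hY1, hYX⟩ := hs
  simp [momentumDenom, h0, ha, hb, hY0, hY1, hYX]

theorem greatIcosaY_mul_momentum (hs : IsRegular s) :
    greatIcosaY s * momentum s =
      3 * momentumFactor s * (s - 1) ^ 4 * (1 + 3 * s) ^ 2 * (-1 + 4 * s + s ^ 2) *
        (-1 - 4 * s + s ^ 2) * yZeroFactor s ^ 2 / momentumDenom s := by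
  have hy := hs.greatIcosaY_denom_ne_zero
  have hp := hs.momentumDenom_ne_zero
  rw [greatIcosaY, momentum, ← yZeroFactor, div_mul_div_comm,
    div_eq_div_iff (mul_ne_zero hy hp) hp]
  ring

theorem greatIcosaY_sub_one_mul_momentum (hs : IsRegular s) :
    (greatIcosaY s - 1) * momentum s =
      192 * momentumFactor s * s ^ 4 * (-1 - 4 * s + s ^ 2) * (1 - 5 * s ^ 2) *
        yOneFactor s ^ 2 / momentumDenom s := by
  have hy := hs.greatIcosaY_denom_ne_zero
  have hp := hs.momentumDenom_ne_zero
  rw [greatIcosaY_sub_one hy, momentum, div_mul_div_comm, div_eq_div_iff (mul_ne_zero hy hp) hp]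
  ring

theorem greatIcosaY_sub_greatIcosaX_mul_momentum (hs : IsRegular s) :
    (greatIcosaY s - greatIcosaX s) * momentum s =
      192 * momentumFactor s * s ^ 4 * (s - 1) ^ 4 * (1 + 3 * s) ^ 2 * (-1 + 4 * s + s ^ 2) *
        (1 - 5 * s ^ 2) * yXFactor s ^ 2 /
      ((1 + s) ^ 4 * (-1 + 3 * s) ^ 2 * momentumDenom s) := by
  have hp := hs.momentumDenom_ne_zero
  rw [greatIcosaY_sub_greatIcosaX hs.greatIcosaX_denom_ne_zero hs.greatIcosaY_denom_ne_zero,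
    momentum, div_mul_div_comm]
  obtain ⟨-, -, hd, -, he, -, hf, -, hq, hP, -⟩ := hs
  rw [div_eq_div_iff (by simp [*]) (by simp [*])]
  ring

theorem hasDerivAt_greatIcosaX
    (hden : (1 + s) ^ 5 * (-1 + 3 * s) ^ 3 * (-1 - 4 * s + s ^ 2) ≠ 0) :
    HasDerivAt greatIcosaX (-1280 * s ^ 4 * (s - 1) ^ 4 * (1 + 3 * s) ^ 2 /
      ((1 + s) ^ 6 * (-1 + 3 * s) ^ 4 * (-1 - 4 * s + s ^ 2) ^ 2)) s := by
  obtain ⟨⟨hd, he⟩, hf⟩ : (1 + s ≠ 0 ∧ -1 + 3 * s ≠ 0) ∧ -1 - 4 * s + s ^ 2 ≠ 0 := by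
    simpa using hden
  refine HasDerivAt.congr_deriv (.fun_div (DifferentiableAt.hasDerivAt (by fun_prop))
    (DifferentiableAt.hasDerivAt (by fun_prop)) hden) ?_
  simp (disch := fun_prop) only [deriv_fun_mul, deriv_fun_pow, Nat.cast_ofNat,
    Nat.add_one_sub_one, deriv_fun_sub, deriv_fun_add, deriv_id'', deriv_const',
    deriv_const_mul_id', deriv_const_add_id']
  rw [div_eq_div_iff (pow_ne_zero 2 hden) (by simp [hd, he, hf])]
  ring

theorem hasDerivAt_greatIcosaY
    (hden : (1 + s) * (-1 + 3 * s) * (1 + 3 * s ^ 2) * greatIcosaP s ≠ 0) :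
    HasDerivAt greatIcosaY (64 * s ^ 3 * (s - 1) ^ 3 * (1 + 3 * s) *
      yZeroFactor s * yOneFactor s *
      (5 * (1 + s) ^ 4 * (-1 + 3 * s) ^ 2 * yZeroFactor s * yOneFactor s +
        3 * momentumFactor s * (-1 + 4 * s + s ^ 2) * (1 - 5 * s ^ 2) * yXFactor s) /
      ((1 + s) * (-1 + 3 * s) * (1 + 3 * s ^ 2) * greatIcosaP s) ^ 2) s := by
  refine HasDerivAt.congr_deriv (.fun_div (DifferentiableAt.hasDerivAt (by fun_prop))
    (DifferentiableAt.hasDerivAt (by fun_prop)) hden) ?_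
  congr 1
  unfold greatIcosaP yZeroFactor yOneFactor yXFactor momentumFactor
  simp (disch := fun_prop) only [deriv_fun_mul, deriv_fun_pow, Nat.cast_ofNat,
    Nat.add_one_sub_one, deriv_fun_sub, deriv_fun_add, deriv_id'', deriv_const',
    deriv_const_mul_id', deriv_const_add_id']
  ring

theorem deriv_greatIcosaX_div (hs : IsRegular s) :
    deriv greatIcosaX s / (greatIcosaX s * (greatIcosaX s - 1)) =
      5 * (1 + s) ^ 4 * (-1 + 3 * s) ^ 2 /
        (s * (s - 1) * (1 + 3 * s) * (-1 + 4 * s + s ^ 2) * (1 - 5 * s ^ 2)) := by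
  have hx := hs.greatIcosaX_denom_ne_zero
  rw [(hasDerivAt_greatIcosaX hx).deriv, greatIcosaX_sub_one hx, greatIcosaX, div_mul_div_comm,
    div_div_div_eq]
  obtain ⟨h0, ha, hd, hb, he, hc, hf, hj, -⟩ := hs
  rw [div_eq_div_iff (by simp [*]) (by simp [*])]
  ring

theorem hasDerivAt_greatIcosaY_okamotoVelocity (hs : IsRegular s) :
    HasDerivAt greatIcosaY (deriv greatIcosaX s / (greatIcosaX s * (greatIcosaX s - 1)) *
      okamotoVelocity (greatIcosaX s) (greatIcosaY s) (momentum s)) s := by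
  have hy := hs.greatIcosaY_denom_ne_zero
  have hp := hs.momentumDenom_ne_zero
  refine (hasDerivAt_greatIcosaY hy).congr_deriv ?_
  rw [okamotoVelocity, greatIcosaY_sub_greatIcosaX_mul_momentum hs, greatIcosaY_sub_one hy,
    deriv_greatIcosaX_div hs, greatIcosaY, ← yZeroFactor]
  obtain ⟨h0, ha, hd, hb, he, hc, -, hj, -⟩ := hs
  rw [← mul_div_assoc (2 : ℂ), div_add_one (by simp [*]), div_mul_div_comm, div_mul_div_comm,
    div_mul_div_comm, div_eq_div_iff (by simp [*]) (by simp [*])]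
  unfold momentumDenom
  ring

theorem hasDerivAt_momentum_okamotoForce (hs : IsRegular s) :
    HasDerivAt momentum (deriv greatIcosaX s / (greatIcosaX s * (greatIcosaX s - 1)) *
      okamotoForce (-1 / 5) (greatIcosaX s) (greatIcosaY s) (momentum s)) s := by
  have hp := hs.momentumDenom_ne_zero
  have hk : (1 + s) ^ 4 * (-1 + 3 * s) ^ 2 ≠ 0 := by
    obtain ⟨-, -, hd, -, he, -⟩ := hs
    simp [hd, he]
  rw [deriv_greatIcosaX_div hs, okamotoForce_eq_div hp hk (greatIcosaY_mul_momentum hs)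
    (greatIcosaY_sub_one_mul_momentum hs) (greatIcosaY_sub_greatIcosaX_mul_momentum hs)]
  obtain ⟨h0, ha, -, hb, -, hc, -, hj, -⟩ := hs
  refine HasDerivAt.congr_deriv (.fun_div (DifferentiableAt.hasDerivAt (by fun_prop))
    (DifferentiableAt.hasDerivAt (by fun_prop)) hp) ?_
  rw [div_mul_div_comm, div_eq_div_iff (pow_ne_zero 2 hp) (by simp [*])]
  unfold momentumDenom greatIcosaP yZeroFactor yOneFactor yXFactor momentumFactor
  simp (disch := fun_prop) only [deriv_fun_mul, deriv_fun_pow, Nat.cast_ofNat,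
    Nat.add_one_sub_one, deriv_fun_sub, deriv_fun_add, deriv_id'', deriv_const',
    deriv_const_mul_id', deriv_const_add_id']
  ring

theorem IsRegular.solvesOkamotoAt (hs : IsRegular s) :
    SolvesOkamotoAt (-1 / 5) greatIcosaX greatIcosaY momentum s :=
  ⟨hasDerivAt_greatIcosaY_okamotoVelocity hs, hasDerivAt_momentum_okamotoForce hs⟩

theorem analyticAt_greatIcosaX
    (hden : (1 + s) ^ 5 * (-1 + 3 * s) ^ 3 * (-1 - 4 * s + s ^ 2) ≠ 0) :
    AnalyticAt ℂ greatIcosaX s := by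
  unfold greatIcosaX
  fun_prop (disch := exact hden)

end GreatIcosahedron

/-- The pair `(x(s), y(s))` is an algebraic solution of PVIμ with
`μ = -1/5` (so `(2μ-1)² = 49/25`), parametrically: with `Y₁ = y'(s)/x'(s)` and
`Y₂ = (y''(s)x'(s) - y'(s)x''(s))/x'(s)³`, the Painlevé VI equation holds at every
parameter value `s` where the denominators are nonzero, `x'(s) ≠ 0`, `x(s) ∉ {0,1}`
and `y(s) ∉ {0, 1, x(s)}`. -/
theorem great_icosahedron_solves_PVI (s : ℂ)
    (hden1 : (1 + s) ^ 5 * (-1 + 3 * s) ^ 3 * (-1 - 4 * s + s ^ 2) ≠ 0)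
    (hden2 : (1 + s) * (-1 + 3 * s) * (1 + 3 * s ^ 2) * greatIcosaP s ≠ 0)
    (hdx : deriv greatIcosaX s ≠ 0)
    (hx0 : greatIcosaX s ≠ 0) (hx1 : greatIcosaX s ≠ 1)
    (hy0 : greatIcosaY s ≠ 0) (hy1 : greatIcosaY s ≠ 1)
    (hyx : greatIcosaY s ≠ greatIcosaX s) :
    (deriv (deriv greatIcosaY) s * deriv greatIcosaX s -
        deriv greatIcosaY s * deriv (deriv greatIcosaX) s) /
        (deriv greatIcosaX s) ^ 3 =
      (1 / 2) * (1 / greatIcosaY s + 1 / (greatIcosaY s - 1) +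
          1 / (greatIcosaY s - greatIcosaX s)) *
          (deriv greatIcosaY s / deriv greatIcosaX s) ^ 2
      - (1 / greatIcosaX s + 1 / (greatIcosaX s - 1) +
          1 / (greatIcosaY s - greatIcosaX s)) *
          (deriv greatIcosaY s / deriv greatIcosaX s)
      + (1 / 2) * (greatIcosaY s * (greatIcosaY s - 1) *
          (greatIcosaY s - greatIcosaX s) /
          ((greatIcosaX s) ^ 2 * (greatIcosaX s - 1) ^ 2)) *
          (49 / 25 + greatIcosaX s * (greatIcosaX s - 1) /
            (greatIcosaY s - greatIcosaX s) ^ 2) := by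
  have hs : GreatIcosahedron.IsRegular s :=
    GreatIcosahedron.isRegular_of_ne hden1 hden2 hx0 hx1 hy0 hy1 hyx
  have hsol := (GreatIcosahedron.isOpen_setOf_isRegular.eventually_mem hs).mono
    fun _ ht => GreatIcosahedron.IsRegular.solvesOkamotoAt ht
  have hddx := (GreatIcosahedron.analyticAt_greatIcosaX hden1).deriv.differentiableAt
  have hparam : (49 / 25 : ℂ) = (2 * (-1 / 5) - 1) ^ 2 := by norm_num
  rw [hparam]
  exact painleveVI_of_solvesOkamotoAt hsol hdx hddx hx0 hx1 hy0 hy1 hyx
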